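/- Let R be a commutative ℚ-algebra and F a formal group law over R. Then there exists a unique formal power series φ ∈ R⟦z⟧ (the logarithm of F) satisfying φ(F(z,w)) = φ(z) + φ(w) in R⟦z,w⟧, φ(0) = 0, and φ'(0) = 1. Moreover, its formal derivative satisfies φ'(z) = F^{0,1}(z,0)^{-1}. -/

import Mathlib

/-!
Coefficient-wise formal calculus for vertex `F`-algebras, following
M. Upmeier, "Vertex F-Algebras and Their Associated Lie Algebra".

Series in one, two or three variables are represented by their coefficient
functions `ℤ → R`, `ℤ → ℤ → R`, …; products are given by coefficient-wise
(finite) sums, expressed via `finsum` (`∑ᶠ`).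
-/

open scoped BigOperators

noncomputable section

/-- Generalized binomial coefficient `C(n,k) = n(n-1)⋯(n-k+1)/k!` for `n : ℤ`, `k : ℕ`. -/
def zbinom (n : ℤ) (k : ℕ) : ℤ :=
  if 0 ≤ n then (n.toNat.choose k : ℤ)
  else (-1 : ℤ) ^ k * (((k : ℤ) - n - 1).toNat.choose k : ℤ)

/-- `C(n,m)` for integer `m`, with `C(n,m) = 0` for `m < 0`. -/
def zbinomZ (n m : ℤ) : ℤ := if m < 0 then 0 else zbinom n m.toNat

/-- `(-1)^n` for `n : ℤ`. -/
def msign (n : ℤ) : ℤ := if Even n then 1 else -1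

section Series

variable {R : Type*} [CommRing R] {M : Type*} [AddCommGroup M] [Module R M]

/-- Product of a one-variable series with `R`-coefficients with an `M`-valued one. -/
def mulS (f : ℤ → R) (g : ℤ → M) : ℤ → M := fun n => ∑ᶠ i : ℤ, f i • g (n - i)

/-- The constant series `1` (one variable). -/
def oneS (R : Type*) [CommRing R] : ℤ → R := fun n => if n = 0 then 1 else 0

/-- Natural powers of a one-variable series. -/
def pow1 (f : ℤ → R) : ℕ → ℤ → R
  | 0 => oneS R
  | k + 1 => mulS f (pow1 f k)

/-- Product of two-variable series. -/
def mulS2 (f : ℤ → ℤ → R) (g : ℤ → ℤ → M) : ℤ → ℤ → M :=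
  fun a b => ∑ᶠ p : ℤ × ℤ, f p.1 p.2 • g (a - p.1) (b - p.2)

/-- The constant series `1` (two variables). -/
def oneS2 (R : Type*) [CommRing R] : ℤ → ℤ → R := fun a b => if a = 0 ∧ b = 0 then 1 else 0

/-- Natural powers of a two-variable series. -/
def pow2 (f : ℤ → ℤ → R) : ℕ → ℤ → ℤ → R
  | 0 => oneS2 R
  | k + 1 => mulS2 f (pow2 f k)

/-- `f ∈ M((z))`: only finitely many negative powers. -/
def IsLaurent (f : ℤ → M) : Prop := ∃ N : ℤ, ∀ n : ℤ, n < N → f n = 0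

/-- `f ∈ M((z,w))`: only finitely many nonzero coefficients with some negative index. -/
def IsLaurent2 (f : ℤ → ℤ → M) : Prop :=
  {p : ℤ × ℤ | (p.1 < 0 ∨ p.2 < 0) ∧ f p.1 p.2 ≠ 0}.Finite

/-- Formal derivative of a one-variable series. -/
def fderiv1 (f : ℤ → R) : ℤ → R := fun n => ((n + 1 : ℤ) : R) * f (n + 1)

/-- The polynomial `z - w` as a two-variable series. -/
def zmw (R : Type*) [CommRing R] : ℤ → ℤ → R :=
  fun i j => if i = 1 ∧ j = 0 then 1 else if i = 0 ∧ j = 1 then -1 else 0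

/-- `∂/∂w` of a two-variable series. -/
def d01 (f : ℤ → ℤ → R) : ℤ → ℤ → R := fun i j => ((j + 1 : ℤ) : R) * f i (j + 1)

/-- `∂/∂z` of a two-variable series. -/
def d10 (f : ℤ → ℤ → R) : ℤ → ℤ → R := fun i j => ((i + 1 : ℤ) : R) * f (i + 1) j

/-- Substitution `p(f(z,w))` of a two-variable series (zero constant term) into a
one-variable power series `p`. -/
def comp2 (p : ℤ → R) (f : ℤ → ℤ → R) : ℤ → ℤ → R :=
  fun a b => ∑ᶠ m : ℕ, p (m : ℤ) * pow2 f m a b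

/-- Substitution `p(f(z))` of a one-variable series (zero constant term) into a
one-variable power series `p`. -/
def comp1 (p : ℤ → R) (f : ℤ → R) : ℤ → R :=
  fun a => ∑ᶠ m : ℕ, p (m : ℤ) * pow1 f m a

/-- `(G - z)/z` for `G ≡ z (mod w)`. -/
def hzS (G : ℤ → ℤ → R) : ℤ → ℤ → R := fun i j => G (i + 1) j - oneS2 R i j

/-- Integer powers `i_{z,w} G^n`, for `G ≡ z (mod w)`, expanded in `R((z))⟦w⟧`:
the Newton expansion `z^n ∑_k C(n,k) ((G-z)/z)^k`. -/
def izwPow (G : ℤ → ℤ → R) (n : ℤ) : ℤ → ℤ → R :=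
  fun a b => ∑ᶠ k : ℕ, (zbinom n k : R) * pow2 (hzS G) k (a - n) b

/-- `(G - w)/w` for `G ≡ w (mod z)`. -/
def hwS (G : ℤ → ℤ → R) : ℤ → ℤ → R := fun i j => G i (j + 1) - oneS2 R i j

/-- Integer powers `i_{w,z} G^n`, for `G ≡ w (mod z)`, expanded in `R((w))⟦z⟧`. -/
def iwzPow (G : ℤ → ℤ → R) (n : ℤ) : ℤ → ℤ → R :=
  fun a b => ∑ᶠ k : ℕ, (zbinom n k : R) * pow2 (hwS G) k a (b - n)

/-- `(G + w)/(-w)` for `G ≡ ι(w) (mod z)`. -/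
def hwNegS (G : ℤ → ℤ → R) : ℤ → ℤ → R := fun i j => -G i (j + 1) - oneS2 R i j

/-- Integer powers `i_{w,z} G^n`, for `G ≡ -w(1+⋯) (mod z)` (e.g. `G = F(z, ι w)`),
expanded in `R((w))⟦z⟧`. -/
def iwzPowNeg (G : ℤ → ℤ → R) (n : ℤ) : ℤ → ℤ → R :=
  fun a b => (msign n : R) * ∑ᶠ k : ℕ, (zbinom n k : R) * pow2 (hwNegS G) k a (b - n)

/-- `(f + z)/(-z)` for a series `f = -z(1 + ⋯)` such as `ι(z)`. -/
def hS (f : ℤ → R) : ℤ → R := fun j => -f (j + 1) - oneS R j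

/-- Integer powers `f(z)^n` (`n : ℤ`) for `f = -z(1+⋯)`, e.g. `f = ι(z)`. -/
def iotaPow (f : ℤ → R) (n : ℤ) : ℤ → R :=
  fun a => (msign n : R) * ∑ᶠ k : ℕ, (zbinom n k : R) * pow1 (hS f) k (a - n)

/-- `f - 1` for a power series with constant term `1`. -/
def hOneS (f : ℤ → R) : ℤ → R := fun j => f j - oneS R j

/-- Multiplicative inverse of a power series with constant term `1`. -/
def invOne (f : ℤ → R) : ℤ → R :=
  fun a => ∑ᶠ k : ℕ, ((-1 : R) ^ k) * pow1 (hOneS f) k a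

end Series

/-- A (one-dimensional, commutative) formal group law `F(z,w)` over `R`, together with
its (unique) inverse `ι`. -/
structure FormalGroupLaw (R : Type*) [CommRing R] where
  F : ℤ → ℤ → R
  F_supp : ∀ i j : ℤ, i < 0 ∨ j < 0 → F i j = 0
  /-- `F(z,0) = z`, so that `F(z,w) = z + w + O(zw)` using commutativity. -/
  F_modw : ∀ i : ℤ, F i 0 = if i = 1 then 1 else 0
  F_comm : ∀ i j : ℤ, F i j = F j i
  /-- associativity `F(F(z,w),v) = F(z,F(w,v))`, coefficient-wise. -/
  F_assoc : ∀ a b c : ℤ,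
    (∑ᶠ m : ℕ, F (m : ℤ) c * pow2 F m a b) = ∑ᶠ n : ℕ, F a (n : ℤ) * pow2 F n b c
  /-- the inverse `ι(z) = -z + O(z²)`. -/
  inv : ℤ → R
  inv_supp : ∀ n : ℤ, n < 1 → inv n = 0
  inv_one : inv 1 = -1
  /-- `F(z, ι(z)) = 0`, coefficient-wise. -/
  inv_eq : ∀ n : ℤ, (∑ᶠ p : ℤ × ℕ, F p.1 (p.2 : ℤ) * pow1 inv p.2 (n - p.1)) = 0

namespace FormalGroupLaw

variable {R : Type*} [CommRing R] {M : Type*} [AddCommGroup M] [Module R M]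

/-- The series `F(z, ι(w))`. -/
def Fzi (𝓕 : FormalGroupLaw R) : ℤ → ℤ → R :=
  fun i j => ∑ᶠ m : ℕ, 𝓕.F i (m : ℤ) * pow1 𝓕.inv m j

/-- The `F`-delta distribution `z⁻¹δ_F(w/z) = i_{z,w}F(z,ιw)⁻¹ - i_{w,z}F(z,ιw)⁻¹`. -/
def delta (𝓕 : FormalGroupLaw R) : ℤ → ℤ → R :=
  fun a b => izwPow 𝓕.Fzi (-1) a b - iwzPowNeg 𝓕.Fzi (-1) a b

/-- `p_F(z) = F^{0,1}(z,0)⁻¹`, the coefficient series of the invariant 1-form. -/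
def pF (𝓕 : FormalGroupLaw R) : ℤ → R := invOne (fun i => 𝓕.F i 1)

/-- `F`-residue: the coefficient of `z⁻¹` in `f(z)·p_F(z)`. -/
def resF (𝓕 : FormalGroupLaw R) (f : ℤ → M) : M := ∑ᶠ i : ℤ, 𝓕.pF i • f (-1 - i)

/-- The `F`-hyperderivative `𝒮^F_n f`, defined by `i_{z,w}f(F(z,w)) = ∑_n (𝒮^F_n f)(z) wⁿ`. -/
def hyper (𝓕 : FormalGroupLaw R) (n : ℕ) (f : ℤ → R) : ℤ → R :=
  fun a => ∑ᶠ m : ℤ, f m * izwPow 𝓕.F m a (n : ℤ)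

/-- `F`-binomial coefficients: `i_{z,w}F(z,w)^n = ∑_{i,j} binomF(n;i,j) z^i w^j`. -/
def binomF (𝓕 : FormalGroupLaw R) (n i j : ℤ) : R := izwPow 𝓕.F n i j

/-- `φ` is a logarithm of `F`: `φ(F(z,w)) = φ(z) + φ(w)`, `φ(0) = 0`, `φ'(0) = 1`. -/
def IsLogarithm (𝓕 : FormalGroupLaw R) (φ : ℤ → R) : Prop :=
  (∀ n : ℤ, n < 0 → φ n = 0) ∧ φ 0 = 0 ∧ φ 1 = 1 ∧
  ∀ a b : ℤ, (∑ᶠ m : ℕ, φ (m : ℤ) * pow2 𝓕.F m a b)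
    = (if b = 0 then φ a else 0) + (if a = 0 then φ b else 0)

end FormalGroupLaw

section Vertex

variable {R : Type*} [CommRing R] {V : Type*} [AddCommGroup V] [Module R V]

/-- For `c = ∑_m c_m v^m ∈ V((v))`, the substitution `v ↦ F(z,w)` (coefficient `(k,n)` of
`z^k w^n`, expanded in `V((z))⟦w⟧`). -/
def substF (𝓕 : FormalGroupLaw R) (c : ℤ → V) : ℤ → ℤ → V :=
  fun k n => ∑ᶠ m : ℤ, izwPow 𝓕.F m k n • c m

/-- Coefficients of `i_{z,w} Y(a, F(z,w)) (Y(b,w)c)`, where `Ya v = Y(a,·)v` and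
`d = Y(b,·)c`. -/
def substFProd (𝓕 : FormalGroupLaw R) (Ya : V → ℤ → V) (d : ℤ → V) : ℤ → ℤ → V :=
  fun k n => ∑ᶠ q : ℤ × ℤ, izwPow 𝓕.F q.1 k (n - q.2) • Ya (d q.2) q.1

end Vertex

/-- A vertex `F`-algebra `(V, 𝟙, 𝒮, Y)` over the formal group law `𝓕`.
`Y a b : ℤ → V` records the coefficients of `Y(a,z)b = ∑_k (Y a b k) z^k`, and
`S n` is the component `𝒮⁽ⁿ⁾` of the `F`-shift operator `𝒮(z) = ∑_{n≥0} 𝒮⁽ⁿ⁾ zⁿ`. -/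
structure VertexFAlgebra (R : Type*) [CommRing R] (𝓕 : FormalGroupLaw R)
    (V : Type*) [AddCommGroup V] [Module R V] where
  vac : V
  S : ℕ → V →ₗ[R] V
  Y : V →ₗ[R] V →ₗ[R] (ℤ → V)
  /-- `Y(a,z)b ∈ V((z))`. -/
  Y_laurent : ∀ a b : V, IsLaurent (Y a b)
  /-- `Y(a,z)𝟙` is holomorphic. -/
  vac_holo : ∀ (a : V) (k : ℤ), k < 0 → Y a vac k = 0
  /-- `Y(a,z)𝟙|_{z=0} = a`. -/
  creation : ∀ a : V, Y a vac 0 = a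
  /-- `Y(𝟙,z) = id`. -/
  Y_vac : ∀ (b : V) (k : ℤ), Y vac b k = if k = 0 then b else 0
  /-- `𝒮(0) = id`. -/
  S_zero : S 0 = LinearMap.id
  /-- `𝒮(z)𝟙 = 𝟙`. -/
  S_vac : ∀ n : ℕ, 1 ≤ n → S n vac = 0
  /-- `𝒮(z) ∘ 𝒮(w) = 𝒮(F(z,w))`, coefficient-wise. -/
  S_comp : ∀ (a : V) (i j : ℕ),
    S i (S j a) = ∑ᶠ m : ℕ, pow2 𝓕.F m (i : ℤ) (j : ℤ) • S m a
  /-- `F`-translation covariance `Y(𝒮(w)a, z)b = i_{z,w} Y(a,F(z,w))b`. -/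
  translation : ∀ (a b : V) (k : ℤ) (n : ℕ),
    Y (S n a) b k = substF 𝓕 (Y a b) k (n : ℤ)
  /-- weak `F`-associativity. -/
  weak_assoc : ∀ a b c : V, ∃ N : ℕ,
    mulS2 (pow2 𝓕.F N) (fun k l => Y (Y a b k) c l)
      = mulS2 (pow2 𝓕.F N) (substFProd 𝓕 (fun v => Y a v) (Y b c))
  /-- skew symmetry `Y(a,z)b = 𝒮(z)(Y(b,ι(z))a)`, coefficient-wise. -/
  skew : ∀ (a b : V) (k : ℤ),
    Y a b k = ∑ᶠ q : ℕ × ℤ, iotaPow 𝓕.inv q.2 (k - (q.1 : ℤ)) • S q.1 (Y b a q.2)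

end

theorem finsum_eq_finsum_comp_of_injective {α β M : Type*} [AddCommMonoid M] {f : β → M}
    {g : α → β} (hg : Function.Injective g) (hf : Function.support f ⊆ Set.range g) :
    ∑ᶠ b, f b = ∑ᶠ a, f (g a) := by
  rw [← finsum_mem_range (f := f) hg, ← finsum_mem_univ f]
  exact finsum_mem_inter_support_eq' _ _ _ fun x hx => by simpa using hf hx

section ChainRule

variable {R : Type*} [CommRing R] {σ : Type*}

theorem MvPowerSeries.pderiv_subst {a : MvPowerSeries σ R}
    (ha : MvPowerSeries.constantCoeff a = 0) (i : σ) (f : PowerSeries R) :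
    MvPowerSeries.pderiv R i (f.subst a) =
      (PowerSeries.derivative R f).subst a * MvPowerSeries.pderiv R i a := by
  have hs : PowerSeries.HasSubst a := PowerSeries.HasSubst.of_constantCoeff_zero ha
  have hpoly : ∀ p : Polynomial R, MvPowerSeries.pderiv R i ((p : PowerSeries R).subst a) =
      (PowerSeries.derivative R (p : PowerSeries R)).subst a * MvPowerSeries.pderiv R i a := by
    intro p
    simp [PowerSeries.subst_coe hs, PowerSeries.derivative_coe,
      Derivation.comp_aeval_eq (a := a) (MvPowerSeries.pderiv R i) p, smul_eq_mul]
  ext n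
  set N := n.degree + 1
  set g : PowerSeries R := PowerSeries.mk fun k => PowerSeries.coeff (k + N) f
  have hf : f = PowerSeries.X ^ N * g + (PowerSeries.trunc N f : PowerSeries R) :=
    PowerSeries.eq_X_pow_mul_shift_add_trunc N f
  have hX : MvPowerSeries.pderiv R i (a ^ N) =
      (PowerSeries.derivative R (PowerSeries.X ^ N)).subst a * MvPowerSeries.pderiv R i a := by
    simpa [PowerSeries.subst_pow hs, PowerSeries.subst_X hs] using hpoly (Polynomial.X ^ N)
  have key : MvPowerSeries.pderiv R i (f.subst a) =
      (PowerSeries.derivative R f).subst a * MvPowerSeries.pderiv R i a +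
      a ^ N * (MvPowerSeries.pderiv R i (g.subst a) -
        (PowerSeries.derivative R g).subst a * MvPowerSeries.pderiv R i a) := by
    rw [hf, PowerSeries.subst_add hs, map_add, map_add, PowerSeries.subst_add hs, hpoly,
      PowerSeries.subst_mul hs, Derivation.leibniz, Derivation.leibniz, PowerSeries.subst_add hs,
      smul_eq_mul, smul_eq_mul, smul_eq_mul, smul_eq_mul, PowerSeries.subst_mul hs,
      PowerSeries.subst_mul hs, PowerSeries.subst_pow hs, PowerSeries.subst_X hs, hX]
    ring
  rw [key, map_add, add_eq_left]
  refine MvPowerSeries.coeff_of_lt_order ?_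
  refine lt_of_lt_of_le ?_ (le_trans le_self_add MvPowerSeries.le_order_mul)
  refine lt_of_lt_of_le ?_ (MvPowerSeries.le_order_pow_of_constantCoeff_eq_zero N ha)
  exact_mod_cast Nat.lt_succ_self _

end ChainRule

section Series

variable {R : Type*} [CommRing R]

/-- The power series with the same non-negative coefficients as `f`. -/
def toPowerSeries (f : ℤ → R) : PowerSeries R := PowerSeries.mk fun n => f n

/-- The two-variable power series with the same non-negative coefficients as `f`. -/
def toMvPowerSeries (f : ℤ → ℤ → R) : MvPowerSeries (Fin 2) R := fun d => f (d 0) (d 1)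

@[simp]
theorem coeff_toPowerSeries (f : ℤ → R) (n : ℕ) :
    PowerSeries.coeff n (toPowerSeries f) = f n := PowerSeries.coeff_mk _ _

@[simp]
theorem coeff_toMvPowerSeries (f : ℤ → ℤ → R) (d : Fin 2 →₀ ℕ) :
    MvPowerSeries.coeff d (toMvPowerSeries f) = f (d 0) (d 1) := rfl

theorem toPowerSeries_mulS {f g : ℤ → R} (hf : ∀ n < 0, f n = 0) (hg : ∀ n < 0, g n = 0) :
    toPowerSeries (mulS f g) = toPowerSeries f * toPowerSeries g := by
  ext n
  rw [PowerSeries.coeff_mul, Finset.Nat.sum_antidiagonal_eq_sum_range_succ_mk]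
  simp only [coeff_toPowerSeries, mulS, smul_eq_mul]
  rw [finsum_eq_finsum_comp_of_injective (g := ((↑) : ℕ → ℤ)) Nat.cast_injective,
    finsum_eq_finsetSum_of_support_subset (s := Finset.range n.succ)]
  · refine Finset.sum_congr rfl fun i hi => ?_
    rw [Nat.cast_sub (by simpa [Nat.lt_succ_iff] using hi)]
  · intro i hi
    by_contra h
    exact hi (by simp only; rw [hg _ (by simp at h; omega), mul_zero])
  · intro i hi
    by_contra h
    refine hi ?_
    simp only
    rw [hf _ ?_, zero_mul]
    by_contra h0
    exact h ⟨i.toNat, by simp; omega⟩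

theorem toMvPowerSeries_mulS2 {f g : ℤ → ℤ → R} (hf : ∀ i j, i < 0 ∨ j < 0 → f i j = 0)
    (hg : ∀ i j, i < 0 ∨ j < 0 → g i j = 0) :
    toMvPowerSeries (mulS2 f g) = toMvPowerSeries f * toMvPowerSeries g := by
  classical
  ext d
  rw [MvPowerSeries.coeff_mul]
  simp only [coeff_toMvPowerSeries, mulS2, smul_eq_mul]
  let e : (Fin 2 →₀ ℕ) × (Fin 2 →₀ ℕ) → ℤ × ℤ := fun q => (q.1 0, q.1 1)
  have hinj : Set.InjOn e (Finset.HasAntidiagonal.antidiagonal d) := by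
    rintro ⟨p, p'⟩ hp ⟨q, q'⟩ hq h
    simp only [Finset.mem_coe, Finset.HasAntidiagonal.mem_antidiagonal] at hp hq
    have h0 : p 0 = q 0 := by have := congrArg Prod.fst h; simpa [e] using this
    have h1 : p 1 = q 1 := by have := congrArg Prod.snd h; simpa [e] using this
    have hpq : p = q := by ext i; fin_cases i <;> assumption
    subst hpq
    rw [add_left_cancel (hp.trans hq.symm)]
  rw [finsum_eq_finsetSum_of_support_subset (s := (Finset.HasAntidiagonal.antidiagonal d).image e),
    Finset.sum_image hinj]
  · refine Finset.sum_congr rfl fun q hq => ?_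
    rw [Finset.HasAntidiagonal.mem_antidiagonal] at hq
    subst hq
    simp [e]
  · rintro ⟨i, j⟩ hij
    simp only [Function.mem_support] at hij
    have hfij : ¬(i < 0 ∨ j < 0) := fun h => hij (by rw [hf _ _ h, zero_mul])
    have hgij : ¬((d 0 : ℤ) - i < 0 ∨ (d 1 : ℤ) - j < 0) :=
      fun h => hij (by rw [hg _ _ h, mul_zero])
    push Not at hfij hgij
    simp only [Finset.coe_image, Set.mem_image, Finset.mem_coe, Finset.HasAntidiagonal.mem_antidiagonal]
    refine ⟨(Finsupp.single 0 i.toNat + Finsupp.single 1 j.toNat,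
      Finsupp.single 0 ((d 0 : ℤ) - i).toNat + Finsupp.single 1 ((d 1 : ℤ) - j).toNat), ?_, ?_⟩
    · ext k
      fin_cases k <;> simp <;> omega
    · simp [e]
      omega

theorem pow2_eq_zero_of_neg {f : ℤ → ℤ → R} (hf : ∀ i j, i < 0 ∨ j < 0 → f i j = 0) (m : ℕ) :
    ∀ a b, a < 0 ∨ b < 0 → pow2 f m a b = 0 := by
  induction m with
  | zero =>
    intro a b h
    exact if_neg (by omega)
  | succ m ih =>
    intro a b h
    refine finsum_eq_zero_of_forall_eq_zero fun p => ?_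
    by_cases hp : p.1 < 0 ∨ p.2 < 0
    · rw [hf _ _ hp, zero_smul]
    · rw [ih _ _ (by omega), smul_zero]

theorem toMvPowerSeries_pow2 {f : ℤ → ℤ → R} (hf : ∀ i j, i < 0 ∨ j < 0 → f i j = 0) (m : ℕ) :
    toMvPowerSeries (pow2 f m) = toMvPowerSeries f ^ m := by
  induction m with
  | zero =>
    ext d
    rw [pow_zero, MvPowerSeries.coeff_one, coeff_toMvPowerSeries]
    simp [pow2, oneS2, Finsupp.ext_iff, Fin.forall_fin_two]
  | succ m ih =>
    rw [pow_succ', ← ih]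
    exact toMvPowerSeries_mulS2 hf (pow2_eq_zero_of_neg hf m)

theorem coeff_subst_toMvPowerSeries {f : ℤ → ℤ → R} (hf : ∀ i j, i < 0 ∨ j < 0 → f i j = 0)
    (h0 : f 0 0 = 0) (p : ℤ → R) (d : Fin 2 →₀ ℕ) :
    MvPowerSeries.coeff d ((toPowerSeries p).subst (toMvPowerSeries f)) =
      ∑ᶠ m : ℕ, p m * pow2 f m (d 0) (d 1) := by
  rw [PowerSeries.coeff_subst (PowerSeries.HasSubst.of_constantCoeff_zero (by
    rw [← MvPowerSeries.coeff_zero_eq_constantCoeff_apply]; simpa using h0))]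
  simp [← toMvPowerSeries_pow2 hf]

theorem toPowerSeries_fderiv1 (f : ℤ → R) :
    toPowerSeries (fderiv1 f) = PowerSeries.derivative R (toPowerSeries f) := by
  ext n
  simp [fderiv1, PowerSeries.coeff_derivative, mul_comm]

theorem toMvPowerSeries_d01 (f : ℤ → ℤ → R) :
    toMvPowerSeries (d01 f) = MvPowerSeries.pderiv R 1 (toMvPowerSeries f) := by
  ext d
  simp [d01, MvPowerSeries.coeff_pderiv, mul_comm]

end Series

namespace FormalGroupLaw

variable {R : Type*} [CommRing R] (𝓕 : FormalGroupLaw R)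

theorem pow2_F_zero_right (m : ℕ) (a : ℤ) : pow2 𝓕.F m a 0 = if a = m then 1 else 0 := by
  induction m generalizing a with
  | zero => simp [pow2, oneS2]
  | succ m ih =>
    simp only [pow2, mulS2, smul_eq_mul]
    rw [finsum_eq_single _ ((1 : ℤ), (0 : ℤ))]
    · simp [𝓕.F_modw, ih, sub_eq_iff_eq_add]
    · rintro ⟨i, j⟩ hij
      rcases lt_trichotomy j 0 with hj | rfl | hj
      · simp [𝓕.F_supp i j (Or.inr hj)]
      · have : i ≠ 1 := fun h => hij (by rw [h])
        simp [𝓕.F_modw, this]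
      · simp only
        rw [pow2_eq_zero_of_neg 𝓕.F_supp m _ _ (Or.inr (by omega)), mul_zero]

theorem pow2_F_one_right (m : ℕ) (a : ℤ) : pow2 𝓕.F m a 1 = m * 𝓕.F (a - m + 1) 1 := by
  induction m generalizing a with
  | zero => simp [pow2, oneS2]
  | succ m ih =>
    simp only [pow2, mulS2, smul_eq_mul]
    rw [finsum_eq_finsetSum_of_support_subset (s := {((1 : ℤ), (0 : ℤ)), (a - m, 1)}),
      Finset.sum_pair (by simp)]
    · simp only [𝓕.F_modw, ih, sub_self, sub_zero, pow2_F_zero_right]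
      rw [show a - 1 - (m : ℤ) + 1 = a - m by ring,
        show a - ((m + 1 : ℕ) : ℤ) + 1 = a - m by push_cast; ring, if_pos trivial,
        if_pos (by ring)]
      push_cast
      ring
    · rintro ⟨i, j⟩ hij
      simp only [Function.mem_support] at hij
      have hj : ¬j < 0 := fun h => hij (by rw [𝓕.F_supp i j (Or.inr h), zero_mul])
      have hj' : ¬1 - j < 0 := fun h => hij (by
        rw [pow2_eq_zero_of_neg 𝓕.F_supp m _ _ (Or.inr h), mul_zero])
      obtain rfl | rfl : j = 0 ∨ j = 1 := by omega
      · have : i = 1 := by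
          by_contra h
          exact hij (by rw [𝓕.F_modw, if_neg h, zero_mul])
        simp [this]
      · have : a - i = m := by
          by_contra h
          exact hij (by rw [sub_self, pow2_F_zero_right, if_neg h, mul_zero])
        simp [← this]

theorem F_zero_zero : 𝓕.F 0 0 = 0 := by simp [𝓕.F_modw]

theorem F_zero_one : 𝓕.F 0 1 = 1 := by simp [𝓕.F_comm 0 1, 𝓕.F_modw]

theorem constantCoeff_toMvPowerSeries_F :
    MvPowerSeries.constantCoeff (toMvPowerSeries 𝓕.F) = 0 := by
  rw [← MvPowerSeries.coeff_zero_eq_constantCoeff_apply]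
  simpa using 𝓕.F_zero_zero

/-- The derivative of the associativity law in the third variable at `0`:
`F^{0,1}(F(z,w),0) = F^{0,1}(z,w) F^{0,1}(w,0)`. -/
theorem subst_F_one :
    (toPowerSeries fun i => 𝓕.F i 1).subst (toMvPowerSeries 𝓕.F) =
      MvPowerSeries.pderiv R 1 (toMvPowerSeries 𝓕.F) *
        (toPowerSeries fun i => 𝓕.F i 1).subst (MvPowerSeries.X 1 : MvPowerSeries (Fin 2) R) := by
  have hX : (toPowerSeries fun i => 𝓕.F i 1).subst (MvPowerSeries.X 1 : MvPowerSeries (Fin 2) R) =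
      toMvPowerSeries fun i j => if i = 0 then 𝓕.F j 1 else 0 := by
    ext d
    rw [PowerSeries.coeff_subst_single]
    simp [Finsupp.ext_iff, Fin.forall_fin_two]
  rw [hX, ← toMvPowerSeries_d01, ← toMvPowerSeries_mulS2]
  · ext d
    rw [coeff_subst_toMvPowerSeries 𝓕.F_supp 𝓕.F_zero_zero, 𝓕.F_assoc]
    simp only [coeff_toMvPowerSeries, mulS2, smul_eq_mul]
    rw [finsum_eq_finsum_comp_of_injective (g := fun n : ℕ => ((d 0 : ℤ), (n : ℤ) - 1))]
    · refine finsum_congr fun n => ?_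
      rw [pow2_F_one_right]
      simp only [d01, sub_self, if_true]
      rw [show (d 1 : ℤ) - (n - 1) = d 1 - n + 1 by ring, sub_add_cancel]
      push_cast
      ring
    · intro m n h
      simpa using h
    · rintro ⟨i, j⟩ hij
      simp only [Function.mem_support] at hij
      have hi : (d 0 : ℤ) - i = 0 := by
        by_contra h
        exact hij (by rw [if_neg h, mul_zero])
      have hj : ¬j + 1 < 0 := fun h => hij (by
        rw [d01, 𝓕.F_supp _ _ (Or.inr h), mul_zero, zero_mul])
      exact ⟨(j + 1).toNat, by ext <;> simp <;> omega⟩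
  · intro i j h
    rcases h with h | h
    · rw [d01, 𝓕.F_supp _ _ (Or.inl h), mul_zero]
    · rcases eq_or_ne j (-1) with rfl | h'
      · simp [d01]
      · rw [d01, 𝓕.F_supp _ _ (Or.inr (by omega)), mul_zero]
  · intro i j h
    split_ifs with hi
    · exact 𝓕.F_supp _ _ (Or.inl (by omega))
    · rfl

variable {𝓕}

theorem IsLogarithm.mulS_fderiv1 {φ : ℤ → R} (hφ : 𝓕.IsLogarithm φ) :
    mulS (fun i => 𝓕.F i 1) (fderiv1 φ) = oneS R := by
  obtain ⟨hneg, -, h1, hlog⟩ := hφ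
  funext a
  have h := hlog a 1
  rw [if_neg one_ne_zero, zero_add, h1] at h
  rw [oneS, ← h, mulS, finsum_eq_finsum_comp_of_injective (g := fun m : ℕ => a - m + 1)]
  · refine finsum_congr fun m => ?_
    rw [pow2_F_one_right, fderiv1, show a - (a - (m : ℤ) + 1) + 1 = m by ring, smul_eq_mul]
    push_cast
    ring
  · intro m n h
    simpa using h
  · intro i hi
    have : ¬a - i + 1 < 0 := fun h => hi (by
      simp only [fderiv1]; rw [hneg _ h, mul_zero, smul_zero])
    exact ⟨(a - i + 1).toNat, by simp only; omega⟩

theorem fderiv1_eq_zero_of_neg {φ : ℤ → R} (hφ : ∀ n < 0, φ n = 0) :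
    ∀ n < 0, fderiv1 φ n = 0 := by
  intro n hn
  rcases eq_or_ne n (-1) with rfl | h
  · simp [fderiv1]
  · rw [fderiv1, hφ _ (by omega), mul_zero]

theorem IsLogarithm.toPowerSeries_mul_derivative {φ : ℤ → R} (hφ : 𝓕.IsLogarithm φ) :
    (toPowerSeries fun i => 𝓕.F i 1) * PowerSeries.derivative R (toPowerSeries φ) = 1 := by
  rw [← toPowerSeries_fderiv1, ← toPowerSeries_mulS (fun n hn => 𝓕.F_supp _ _ (Or.inl hn))
    (fderiv1_eq_zero_of_neg hφ.1), hφ.mulS_fderiv1]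
  ext n
  simp [oneS, PowerSeries.coeff_one]

theorem IsLogarithm.unique [IsAddTorsionFree R] {φ ψ : ℤ → R} (hφ : 𝓕.IsLogarithm φ)
    (hψ : 𝓕.IsLogarithm ψ) : φ = ψ := by
  have h : toPowerSeries φ = toPowerSeries ψ := by
    refine PowerSeries.derivative.ext ?_ ?_
    · exact left_inv_eq_right_inv ((mul_comm _ _).trans hφ.toPowerSeries_mul_derivative)
        hψ.toPowerSeries_mul_derivative
    · rw [← PowerSeries.coeff_zero_eq_constantCoeff_apply,
        ← PowerSeries.coeff_zero_eq_constantCoeff_apply]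
      simp [hφ.2.1, hψ.2.1]
  funext n
  rcases lt_or_ge n 0 with hn | hn
  · rw [hφ.1 n hn, hψ.1 n hn]
  · lift n to ℕ using hn
    simpa using congrArg (PowerSeries.coeff n) h

/-- A series with derivative `F^{0,1}(z,0)⁻¹` and zero constant term is a logarithm. -/
theorem isLogarithm_of_mul_derivative [IsAddTorsionFree R] {φ : ℤ → R} (hneg : ∀ n < 0, φ n = 0)
    (h0 : φ 0 = 0)
    (hφ : (toPowerSeries fun i => 𝓕.F i 1) * PowerSeries.derivative R (toPowerSeries φ) = 1) :
    𝓕.IsLogarithm φ := by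
  have h1 : φ 1 = 1 := by
    have := congrArg (PowerSeries.coeff 0) hφ
    simpa [PowerSeries.coeff_derivative, 𝓕.F_zero_one, PowerSeries.coeff_mul] using this
  refine ⟨hneg, h0, h1, fun a b => ?_⟩
  have hF := PowerSeries.HasSubst.of_constantCoeff_zero 𝓕.constantCoeff_toMvPowerSeries_F
  have hX : PowerSeries.HasSubst (MvPowerSeries.X 1 : MvPowerSeries (Fin 2) R) :=
    PowerSeries.HasSubst.X 1
  have hone : ∀ {s : MvPowerSeries (Fin 2) R}, PowerSeries.HasSubst s →
      (1 : PowerSeries R).subst s = 1 := fun hs => by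
    rw [← PowerSeries.coe_substAlgHom hs, map_one]
  have hd : MvPowerSeries.pderiv R 1 ((toPowerSeries φ).subst (toMvPowerSeries 𝓕.F)) =
      MvPowerSeries.pderiv R 1
        ((toPowerSeries φ).subst (MvPowerSeries.X 1 : MvPowerSeries (Fin 2) R)) := by
    have e1 := congrArg (PowerSeries.subst (toMvPowerSeries 𝓕.F)) hφ
    have e2 := congrArg (PowerSeries.subst (MvPowerSeries.X 1 : MvPowerSeries (Fin 2) R)) hφ
    rw [PowerSeries.subst_mul hF, hone hF, 𝓕.subst_F_one] at e1
    rw [PowerSeries.subst_mul hX, hone hX] at e2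
    rw [MvPowerSeries.pderiv_subst 𝓕.constantCoeff_toMvPowerSeries_F,
      MvPowerSeries.pderiv_subst (MvPowerSeries.constantCoeff_X _), MvPowerSeries.pderiv_X_self,
      mul_one]
    exact left_inv_eq_right_inv (by rw [← e1]; ring) e2
  by_cases hab : a < 0 ∨ b < 0
  · rw [finsum_eq_zero_of_forall_eq_zero fun m => by
      rw [pow2_eq_zero_of_neg 𝓕.F_supp m a b hab, mul_zero]]
    rcases hab with h | h
    · rw [if_neg h.ne, hneg a h, ite_self, add_zero]
    · rw [if_neg h.ne, hneg b h, ite_self, add_zero]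
  push Not at hab
  obtain ⟨ha, hb⟩ := hab
  lift a to ℕ using ha
  lift b to ℕ using hb
  rcases b with _ | b
  · simp only [Nat.cast_zero, if_true, h0, ite_self, add_zero, pow2_F_zero_right]
    rw [finsum_eq_single _ a fun m hm => by simp [hm.symm]]
    simp
  · have := congrArg (MvPowerSeries.coeff (Finsupp.single 0 a + Finsupp.single 1 b)) hd
    rw [MvPowerSeries.coeff_pderiv, MvPowerSeries.coeff_pderiv,
      coeff_subst_toMvPowerSeries 𝓕.F_supp 𝓕.F_zero_zero, PowerSeries.coeff_subst_single] at this
    simp only [Finsupp.add_apply, Finsupp.single_apply, Finsupp.ext_iff, Fin.forall_fin_two,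
      coeff_toPowerSeries] at this
    refine nsmul_right_injective b.succ_ne_zero ?_
    simp only [nsmul_eq_mul, Nat.succ_eq_add_one, Nat.cast_eq_zero]
    simpa [mul_comm] using this

theorem exists_isLogarithm [Algebra ℚ R] [IsAddTorsionFree R] : ∃ φ, 𝓕.IsLogarithm φ := by
  set p : PowerSeries R := toPowerSeries fun i => 𝓕.F i 1
  have hp : PowerSeries.constantCoeff p = ((1 : Rˣ) : R) := by
    rw [← PowerSeries.coeff_zero_eq_constantCoeff_apply]
    simpa [p] using 𝓕.F_zero_one
  refine ⟨fun n => if 0 < n then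
    (n : ℚ)⁻¹ • PowerSeries.coeff (n.toNat - 1) (p.invOfUnit 1) else 0,
    isLogarithm_of_mul_derivative (fun n hn => if_neg hn.not_gt) (if_neg (lt_irrefl _)) ?_⟩
  convert PowerSeries.mul_invOfUnit p 1 hp using 2
  ext n
  rw [PowerSeries.coeff_derivative, coeff_toPowerSeries, if_pos (by positivity)]
  have hn : ((n : R) + 1) = algebraMap ℚ R (n + 1) := by simp
  rw [hn, ← Algebra.commutes, ← Algebra.smul_def, smul_smul]
  simp [mul_inv_cancel₀ (n.cast_add_one_ne_zero : (n : ℚ) + 1 ≠ 0)]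

end FormalGroupLaw

/-- over a `ℚ`-algebra `R`, every formal group law has a unique logarithm
`φ` (`φ(F(z,w)) = φ(z)+φ(w)`, `φ(0)=0`, `φ'(0)=1`), and `φ'(z) = F^{0,1}(z,0)⁻¹`
(expressed by `φ'(z)·F^{0,1}(z,0) = 1`). -/
theorem existence_logarithm (R : Type*) [CommRing R] [Algebra ℚ R]
    (𝓕 : FormalGroupLaw R) :
    (∃! φ : ℤ → R, 𝓕.IsLogarithm φ) ∧
    (∀ φ : ℤ → R, 𝓕.IsLogarithm φ →
      mulS (fun i => 𝓕.F i 1) (fderiv1 φ) = oneS R) := by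
  have : IsAddTorsionFree R := IsAddTorsionFree.of_module_rat R
  obtain ⟨φ, hφ⟩ := 𝓕.exists_isLogarithm
  exact ⟨⟨φ, hφ, fun ψ hψ => hψ.unique hφ⟩, fun ψ hψ => hψ.mulS_fderiv1⟩
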